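/- Let X, Y be Banach spaces, D ⊂ X open and convex, F : D → Y twice continuously Fréchet differentiable, x₀ ∈ D with F'(x₀) invertible. Suppose that for some γ > 0, ‖F'(x₀)⁻¹[F''(y) − F''(x)]‖ ≤ 2γ/(1 − γ‖y − x‖ − γ‖x − x₀‖)³ − 2γ/(1 − γ‖x − x₀‖)³ for all x, y with ‖y − x‖ + ‖x − x₀‖ < 1/γ, and that ‖F'(x₀)⁻¹F(x₀)‖ ≤ β and ‖F'(x₀)⁻¹F''(x₀)‖ ≤ 2γ. If α := βγ < 3 − 2√2, then: the Halley sequence (x_k) starting at x₀ is well defined, contained in B(x₀,t*), and converges to a point x* in the closed ball of radius t* about x₀ with F(x*) = 0; x* is the unique zero of F in B(x₀,t**), where t* = (1 + α − √((1+α)² − 8α))/(4γ) and t** = (1 + α + √((1+α)² − 8α))/(4γ); the error bound ‖x* − x_{k+1}‖ ≤ (t* − t_{k+1})·(‖x* − x_k‖/(t* − t_k))³ holds for all k, where (t_k) is the majorizing sequence for f(t) = β − t + γt²/(1 − γt); and ‖x* − x_{k+1}‖ ≤ 8γ²/(3(2(1 − γt*)² − 1)²)·‖x* − x_k‖³ for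 all k. -/

import Mathlib

open Metric Set

/-!
Normalize `G = F'(x₀)⁻¹ ∘ F`. As long as `‖x - x₀‖ ≤ t < t*` and `‖G x‖ ≤ f t`, every quantity in
the Halley step at `x` is dominated by its counterpart for `f` at `t`: `‖G'(x)⁻¹‖ ≤ -1/f'(t)` by
the Neumann series, `‖G''(x)‖ ≤ f''(t)`, and the second-order Taylor remainder of `G` by that of
`f`. With `d = x_{k+1} - x_k`, the value `G x_{k+1}` is `½ G''(x_k)[L_G(x_k) d, d]` plus the Taylor
remainder, so the two conditions pass from `(x_k, t_k)` to the next iterates and the scalar sequence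
majorizes `(x_k)`. Comparing in the same way the error representation
`y - x_{k+1} = (I - L_G)⁻¹ G'⁻¹ (½ G''[G'⁻¹(½ G''(d, d) + r), d] - r)`, `d = y - x_k`, of a zero `y`
with the one for `t*` gives the cubic error bound, and hence also uniqueness: any zero in
`B(x₀, t**)` lies within `t*` of `x₀`, because `f < 0` between `t*` and `t**`, so that the iterates
converge to it.

In the variable `1 - γt` the majorant is rational with `(1 - γt*)(1 - γt**) = 1/2`, and
`t* - t_{k+1}` is an explicit multiple of `(t* - t_k)³`.
-/

open Filter Topology

lemma exists_tendsto_of_dist_le_sub {M : Type*} [PseudoMetricSpace M] [CompleteSpace M] {x : ℕ → M}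
    {t : ℕ → ℝ} {T : ℝ} (hx : ∀ k, dist (x k) (x (k + 1)) ≤ t (k + 1) - t k)
    (ht : Tendsto t atTop (𝓝 T)) :
    ∃ a, Tendsto x atTop (𝓝 a) ∧ ∀ k, dist (x k) a ≤ T - t k := by
  have hmono : Monotone t :=
    monotone_nat_of_le_succ fun k => sub_nonneg.1 (dist_nonneg.trans (hx k))
  have hdist : ∀ n m, n ≤ m → dist (x n) (x m) ≤ T - t n := fun n m hnm =>
    calc dist (x n) (x m) ≤ ∑ k ∈ Finset.Ico n m, (t (k + 1) - t k) :=
          dist_le_Ico_sum_of_dist_le hnm fun _ _ => hx _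
      _ = t m - t n := Finset.sum_Ico_sub t hnm
      _ ≤ T - t n := by gcongr; exact hmono.ge_of_tendsto ht m
  obtain ⟨a, ha⟩ := cauchySeq_tendsto_of_complete (cauchySeq_of_le_tendsto_0' _ hdist
    (by simpa using ht.const_sub T))
  exact ⟨a, ha, fun k => le_of_tendsto (tendsto_const_nhds.dist ha)
    ((eventually_ge_atTop k).mono (hdist k))⟩

section CurveEstimates

variable {E : Type*} [NormedAddCommGroup E] [NormedSpace ℝ E]

lemma norm_sub_le_of_norm_deriv_le {φ φ' : ℝ → E} {ψ ψ' : ℝ → ℝ} {a b : ℝ} (hab : a ≤ b)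
    (hφ : ∀ s ∈ Icc a b, HasDerivAt φ (φ' s) s) (hψ : ∀ s ∈ Icc a b, HasDerivAt ψ (ψ' s) s)
    (hle : ∀ s ∈ Icc a b, ‖φ' s‖ ≤ ψ' s) : ‖φ b - φ a‖ ≤ ψ b - ψ a :=
  image_norm_le_of_norm_deriv_right_le_deriv_boundary' (a := a) (b := b)
    (f := fun s => φ s - φ a) (B := fun s => ψ s - ψ a)
    (fun s hs => ((hφ s hs).sub_const _).continuousAt.continuousWithinAt)
    (fun s hs => ((hφ s (Ico_subset_Icc_self hs)).sub_const _).hasDerivWithinAt)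
    (by simp)
    (fun s hs => ((hψ s hs).sub_const _).continuousAt.continuousWithinAt)
    (fun s hs => ((hψ s (Ico_subset_Icc_self hs)).sub_const _).hasDerivWithinAt)
    (fun s hs => hle s (Ico_subset_Icc_self hs)) (right_mem_Icc.2 hab)

lemma norm_taylor_two_le {φ φ' φ'' : ℝ → E} {ψ ψ' ψ'' : ℝ → ℝ}
    (hφ : ∀ s ∈ Icc (0 : ℝ) 1, HasDerivAt φ (φ' s) s)
    (hφ' : ∀ s ∈ Icc (0 : ℝ) 1, HasDerivAt φ' (φ'' s) s)
    (hψ : ∀ s ∈ Icc (0 : ℝ) 1, HasDerivAt ψ (ψ' s) s)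
    (hψ' : ∀ s ∈ Icc (0 : ℝ) 1, HasDerivAt ψ' (ψ'' s) s)
    (hle : ∀ s ∈ Icc (0 : ℝ) 1, ‖φ'' s - φ'' 0‖ ≤ ψ'' s - ψ'' 0) :
    ‖φ 1 - φ 0 - φ' 0 - (2⁻¹ : ℝ) • φ'' 0‖ ≤ ψ 1 - ψ 0 - ψ' 0 - 2⁻¹ * ψ'' 0 := by
  have first_order : ∀ s ∈ Icc (0 : ℝ) 1,
      ‖φ' s - φ' 0 - s • φ'' 0‖ ≤ ψ' s - ψ' 0 - s * ψ'' 0 := by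
    intro s hs
    have h := norm_sub_le_of_norm_deriv_le hs.1
      (φ := fun r => φ' r - r • φ'' 0) (φ' := fun r => φ'' r - φ'' 0)
      (ψ := fun r => ψ' r - r * ψ'' 0) (ψ' := fun r => ψ'' r - ψ'' 0)
      (fun r hr => by
        simpa using! (hφ' r ⟨hr.1, hr.2.trans hs.2⟩).sub ((hasDerivAt_id r).smul_const (φ'' 0)))
      (fun r hr => by
        simpa using! (hψ' r ⟨hr.1, hr.2.trans hs.2⟩).sub ((hasDerivAt_id r).mul_const (ψ'' 0)))
      (fun r hr => hle r ⟨hr.1, hr.2.trans hs.2⟩)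
    simpa only [zero_smul, sub_zero, zero_mul, sub_right_comm] using h
  have hsq : ∀ s : ℝ, HasDerivAt (fun r : ℝ => 2⁻¹ * r ^ 2) s s := fun s => by
    simpa using! (hasDerivAt_pow 2 s).const_mul (2⁻¹ : ℝ)
  have h := norm_sub_le_of_norm_deriv_le zero_le_one
    (φ := fun r => φ r - r • φ' 0 - (2⁻¹ * r ^ 2) • φ'' 0)
    (φ' := fun r => φ' r - φ' 0 - r • φ'' 0)
    (ψ := fun r => ψ r - r * ψ' 0 - (2⁻¹ * r ^ 2) * ψ'' 0)
    (ψ' := fun r => ψ' r - ψ' 0 - r * ψ'' 0)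
    (fun r hr => by
      simpa using! ((hφ r hr).sub ((hasDerivAt_id r).smul_const (φ' 0))).sub
        ((hsq r).smul_const (φ'' 0)))
    (fun r hr => by
      simpa using! ((hψ r hr).sub ((hasDerivAt_id r).mul_const (ψ' 0))).sub
        ((hsq r).mul_const (ψ'' 0)))
    first_order
  simpa [sub_right_comm _ _ (φ 0), sub_right_comm _ _ (ψ 0)] using h

end CurveEstimates

section SegmentEstimates

variable {E F : Type*} [NormedAddCommGroup E] [NormedSpace ℝ E] [NormedAddCommGroup F]
  [NormedSpace ℝ F] {G : E → F} {G' : E → E →L[ℝ] F} {G'' : E → E →L[ℝ] E →L[ℝ] F} {x d : E}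
  {f f' f'' : ℝ → ℝ} {t : ℝ}

lemma hasDerivAt_comp_segment {s : ℝ} (hG : HasFDerivAt G (G' (x + s • d)) (x + s • d)) :
    HasDerivAt (fun r : ℝ => G (x + r • d)) (G' (x + s • d) d) s := by
  have hline : HasDerivAt (fun r : ℝ => x + r • d) d s := by
    simpa using! ((hasDerivAt_id s).smul_const d).const_add x
  exact hG.comp_hasDerivAt s hline

lemma hasDerivAt_comp_add_mul {s τ : ℝ} (hf : HasDerivAt f (f' (t + s * τ)) (t + s * τ)) :
    HasDerivAt (fun r => f (t + r * τ)) (f' (t + s * τ) * τ) s := by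
  have hline : HasDerivAt (fun r : ℝ => t + r * τ) τ s := by
    simpa using! ((hasDerivAt_id s).mul_const τ).const_add t
  exact HasDerivAt.comp (h₂ := f) s hf hline

lemma norm_segment_sub_le
    (hG : ∀ s ∈ Icc (0 : ℝ) 1, HasFDerivAt G (G' (x + s • d)) (x + s • d))
    (hf : ∀ s ∈ Icc (0 : ℝ) 1, HasDerivAt f (f' (t + s * ‖d‖)) (t + s * ‖d‖))
    (hle : ∀ s ∈ Icc (0 : ℝ) 1, ‖G' (x + s • d)‖ ≤ f' (t + s * ‖d‖)) :
    ‖G (x + d) - G x‖ ≤ f (t + ‖d‖) - f t := by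
  have h := norm_sub_le_of_norm_deriv_le zero_le_one
    (fun s hs => hasDerivAt_comp_segment (hG s hs))
    (fun s hs => hasDerivAt_comp_add_mul (hf s hs))
    (fun s hs => ContinuousLinearMap.le_of_opNorm_le _ (hle s hs) d)
  simpa using h

lemma norm_segment_taylor_two_le
    (hG : ∀ s ∈ Icc (0 : ℝ) 1, HasFDerivAt G (G' (x + s • d)) (x + s • d))
    (hG' : ∀ s ∈ Icc (0 : ℝ) 1, HasFDerivAt G' (G'' (x + s • d)) (x + s • d))
    (hf : ∀ s ∈ Icc (0 : ℝ) 1, HasDerivAt f (f' (t + s * ‖d‖)) (t + s * ‖d‖))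
    (hf' : ∀ s ∈ Icc (0 : ℝ) 1, HasDerivAt f' (f'' (t + s * ‖d‖)) (t + s * ‖d‖))
    (hle : ∀ s ∈ Icc (0 : ℝ) 1, ‖G'' (x + s • d) - G'' x‖ ≤ f'' (t + s * ‖d‖) - f'' t) :
    ‖G (x + d) - G x - G' x d - (2⁻¹ : ℝ) • G'' x d d‖ ≤
      f (t + ‖d‖) - f t - f' t * ‖d‖ - 2⁻¹ * (f'' t * ‖d‖ ^ 2) := by
  have h := norm_taylor_two_le
    (φ'' := fun s => G'' (x + s • d) d d) (ψ'' := fun s => f'' (t + s * ‖d‖) * ‖d‖ * ‖d‖)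
    (fun s hs => hasDerivAt_comp_segment (hG s hs))
    (fun s hs => by
      simpa using! (hasDerivAt_comp_segment (hG' s hs)).clm_apply (hasDerivAt_const s d))
    (fun s hs => hasDerivAt_comp_add_mul (hf s hs))
    (fun s hs => (hasDerivAt_comp_add_mul (hf' s hs)).mul_const ‖d‖)
    (fun s hs => by
      have h := (G'' (x + s • d) - G'' x).le_of_opNorm₂_le_of_le (x := d) (y := d) (hle s hs)
        le_rfl le_rfl
      simpa [sub_mul] using h)
  simpa [mul_assoc, ← sq] using h

end SegmentEstimates

section Halley

variable {X Y : Type*} [NormedAddCommGroup X] [NormedSpace ℝ X]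
  [NormedAddCommGroup Y] [NormedSpace ℝ Y]

lemma exists_equiv_id_sub [CompleteSpace X] {A : X →L[ℝ] X} {q : ℝ} (hA : ‖A‖ ≤ q) (hq : q < 1) :
    ∃ m : X ≃L[ℝ] X, (m : X →L[ℝ] X) = ContinuousLinearMap.id ℝ X - A ∧
      ‖(m.symm : X →L[ℝ] X)‖ ≤ (1 - q)⁻¹ := by
  let m := ContinuousLinearEquiv.ofUnit (Units.oneSub A (hA.trans_lt hq))
  refine ⟨m, rfl, ContinuousLinearMap.opNorm_le_bound _ (by simpa using hq.le) fun z => ?_⟩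
  obtain ⟨w, rfl⟩ := m.surjective z
  have hsub : ‖w‖ - ‖A w‖ ≤ ‖m w‖ := norm_sub_norm_le w (A w)
  have hAw : ‖A w‖ ≤ q * ‖w‖ := A.le_of_opNorm_le hA w
  rw [ContinuousLinearEquiv.coe_coe, m.symm_apply_apply, inv_mul_eq_div, le_div_iff₀ (by linarith)]
  linarith

/-- The degree of logarithmic convexity `L_F(x) = ½F'(x)⁻¹F''(x)F'(x)⁻¹F(x)` of Halley's method,
as a function of `A = F'(x)⁻¹`, `B = F''(x)` and `g = F(x)`. -/
noncomputable def convexityOperator (A : Y →L[ℝ] X) (B : X →L[ℝ] X →L[ℝ] Y) (g : Y) : X →L[ℝ] X :=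
  (2⁻¹ : ℝ) • A.comp (B (A g))

lemma norm_convexityOperator_le {A : Y →L[ℝ] X} {B : X →L[ℝ] X →L[ℝ] Y} {g : Y} {κ b c : ℝ}
    (hA : ‖A‖ ≤ κ) (hB : ‖B‖ ≤ b) (hg : ‖g‖ ≤ c) :
    ‖convexityOperator A B g‖ ≤ 2⁻¹ * (κ * (b * (κ * c))) := by
  have hAg : ‖A g‖ ≤ κ * c := A.le_of_opNorm_le_of_le hA hg
  rw [convexityOperator, norm_smul, Real.norm_of_nonneg (by norm_num)]
  have : 0 ≤ κ := (norm_nonneg _).trans hA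
  gcongr
  exact (A.opNorm_comp_le _).trans
    (mul_le_mul hA (B.le_of_opNorm_le_of_le hB hAg) (norm_nonneg _) this)

/-- The Halley iterate `x - [I - L_F(x)]⁻¹F'(x)⁻¹F(x)`. Inverses are `ContinuousLinearMap.inverse`,
which is `0` on operators that are not invertible. -/
noncomputable def halleyNext (F : X → Y) (F' : X → X →L[ℝ] Y) (F'' : X → X →L[ℝ] X →L[ℝ] Y)
    (x : X) : X :=
  let A := (F' x).inverse
  x - (ContinuousLinearMap.id ℝ X - convexityOperator A (F'' x) (F x)).inverse (A (F x))

/-- The Halley sequence `(x_k)` started at `x₀`. -/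
noncomputable def halleySeq (F : X → Y) (F' : X → X →L[ℝ] Y) (F'' : X → X →L[ℝ] X →L[ℝ] Y)
    (x₀ : X) (k : ℕ) : X :=
  (halleyNext F F' F'')^[k] x₀

lemma halleySeq_succ (F : X → Y) (F' : X → X →L[ℝ] Y) (F'' : X → X →L[ℝ] X →L[ℝ] Y)
    (x₀ : X) (k : ℕ) : halleySeq F F' F'' x₀ (k + 1) =
      halleyNext F F' F'' (halleySeq F F' F'' x₀ k) :=
  Function.iterate_succ_apply' _ _ _

/-- `y` arises from `x` by a well-defined Halley step, in which `e` and `m` are the invertible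
operators `F'(x)` and `I - L_F(x)`. -/
structure IsHalleyStep (F : X → Y) (F' : X → X →L[ℝ] Y) (F'' : X → X →L[ℝ] X →L[ℝ] Y)
    (x y : X) (e : X ≃L[ℝ] Y) (m : X ≃L[ℝ] X) : Prop where
  coe_deriv : (e : X →L[ℝ] Y) = F' x
  coe_operator : (m : X →L[ℝ] X) =
    ContinuousLinearMap.id ℝ X - convexityOperator (e.symm : Y →L[ℝ] X) (F'' x) (F x)
  eq_sub : y = x - m.symm (e.symm (F x))

variable {F : X → Y} {F' : X → X →L[ℝ] Y} {F'' : X → X →L[ℝ] X →L[ℝ] Y} {x y : X}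
  {e : X ≃L[ℝ] Y} {m : X ≃L[ℝ] X}

lemma isHalleyStep_halleyNext (he : (e : X →L[ℝ] Y) = F' x) (hm : (m : X →L[ℝ] X) =
      ContinuousLinearMap.id ℝ X - convexityOperator (e.symm : Y →L[ℝ] X) (F'' x) (F x)) :
    IsHalleyStep F F' F'' x (halleyNext F F' F'' x) e m where
  coe_deriv := he
  coe_operator := hm
  eq_sub := by
    simp only [halleyNext, ← he, ContinuousLinearMap.inverse_equiv, ← hm]
    rfl

namespace IsHalleyStep

variable (h : IsHalleyStep F F' F'' x y e m)
include h

lemma apply_eq (z : X) :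
    m z = z - convexityOperator (e.symm : Y →L[ℝ] X) (F'' x) (F x) z :=
  DFunLike.congr_fun h.coe_operator z

lemma norm_step_le {κ μ c : ℝ} (he : ‖(e.symm : Y →L[ℝ] X)‖ ≤ κ) (hm : ‖(m.symm : X →L[ℝ] X)‖ ≤ μ)
    (hF : ‖F x‖ ≤ c) : ‖y - x‖ ≤ μ * (κ * c) := by
  rw [h.eq_sub, sub_sub_cancel_left, norm_neg]
  exact (m.symm : X →L[ℝ] X).le_of_opNorm_le_of_le hm
    ((e.symm : Y →L[ℝ] X).le_of_opNorm_le_of_le he hF)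

lemma residual_eq : F x + F' x (y - x) + (2⁻¹ : ℝ) • F'' x (y - x) (y - x) =
    (2⁻¹ : ℝ) • F'' x (convexityOperator (e.symm : Y →L[ℝ] X) (F'' x) (F x) (y - x)) (y - x) := by
  set d := y - x with hd
  set ℓ := convexityOperator (e.symm : Y →L[ℝ] X) (F'' x) (F x) d with hℓ
  have hsymm : e.symm (F x) = ℓ - d := by
    have hmd : m d = -e.symm (F x) := by simp [hd, h.eq_sub]
    rw [← neg_eq_iff_eq_neg.2 hmd, h.apply_eq, neg_sub]
  have hF : F x = F' x ℓ - F' x d := by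
    rw [← map_sub, ← hsymm, ← h.coe_deriv]; simp
  have hF'ℓ : F' x ℓ = (2⁻¹ : ℝ) • F'' x (ℓ - d) d := by
    rw [← hsymm, ← h.coe_deriv, hℓ]; simp [convexityOperator]
  rw [hF, hF'ℓ, map_sub (F'' x) ℓ d, sub_apply, smul_sub]
  abel

lemma norm_residual_le {b l : ℝ} (hF'' : ‖F'' x‖ ≤ b)
    (hl : ‖convexityOperator (e.symm : Y →L[ℝ] X) (F'' x) (F x)‖ ≤ l) :
    ‖F x + F' x (y - x) + (2⁻¹ : ℝ) • F'' x (y - x) (y - x)‖ ≤ 2⁻¹ * (b * l * ‖y - x‖ ^ 2) := by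
  rw [h.residual_eq, norm_smul, Real.norm_of_nonneg (by norm_num)]
  gcongr
  refine ((F'' x).le_of_opNorm₂_le_of_le hF'' (ContinuousLinearMap.le_of_opNorm_le _ hl _)
    le_rfl).trans_eq (by ring)

lemma sub_eq {z : X} {r : Y}
    (hr : F x + F' x (z - x) + (2⁻¹ : ℝ) • F'' x (z - x) (z - x) + r = 0) :
    z - y = m.symm (e.symm ((2⁻¹ : ℝ) •
      F'' x (e.symm ((2⁻¹ : ℝ) • F'' x (z - x) (z - x) + r)) (z - x) - r)) := by
  set d := z - x
  set q := (2⁻¹ : ℝ) • F'' x d d + r with hq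
  have hF : F x = -e d - q := by
    rw [hq, ← ContinuousLinearEquiv.coe_coe, h.coe_deriv, eq_sub_iff_add_eq,
      eq_neg_iff_add_eq_zero, ← hr]
    abel
  have hsymm : e.symm (F x) = -d - e.symm q := by simp [hF]
  have hzy : m (z - y) = m d + e.symm (F x) := by
    rw [h.eq_sub, ← sub_add, map_add, m.apply_symm_apply]
  apply m.injective
  rw [hzy, m.apply_symm_apply, h.apply_eq]
  apply e.injective
  simp only [convexityOperator, smul_apply, ContinuousLinearMap.comp_apply,
    ContinuousLinearEquiv.coe_coe, map_add, map_sub, map_smul, e.apply_symm_apply, hsymm,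
    map_neg, sub_apply, neg_apply, hq]
  module

lemma norm_sub_le_of_residual {κ μ b ρ : ℝ} {z : X} {r : Y}
    (he : ‖(e.symm : Y →L[ℝ] X)‖ ≤ κ) (hm : ‖(m.symm : X →L[ℝ] X)‖ ≤ μ) (hF'' : ‖F'' x‖ ≤ b)
    (hr : F x + F' x (z - x) + (2⁻¹ : ℝ) • F'' x (z - x) (z - x) + r = 0) (hrρ : ‖r‖ ≤ ρ) :
    ‖z - y‖ ≤ μ * (κ * (2⁻¹ * (b * (κ * (2⁻¹ * (b * ‖z - x‖ ^ 2) + ρ)) * ‖z - x‖) + ρ)) := by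
  rw [h.sub_eq hr]
  have hhalf : ‖(2⁻¹ : ℝ)‖ = 2⁻¹ := by norm_num
  refine (m.symm : X →L[ℝ] X).le_of_opNorm_le_of_le hm
    ((e.symm : Y →L[ℝ] X).le_of_opNorm_le_of_le he ((norm_sub_le _ _).trans ?_))
  rw [norm_smul, hhalf]
  gcongr
  refine (F'' x).le_of_opNorm₂_le_of_le hF''
    ((e.symm : Y →L[ℝ] X).le_of_opNorm_le_of_le he ((norm_add_le _ _).trans ?_)) le_rfl
  rw [norm_smul, hhalf]
  gcongr
  exact ((F'' x).le_of_opNorm₂_le_of_le hF'' le_rfl le_rfl).trans_eq (by ring)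

end IsHalleyStep
end Halley

section ScalarHalley

/-- The scalar degree of logarithmic convexity `f f'' / (2 f'²)`, with `f'` and `f''` given as
functions. -/
noncomputable def convexityDegree (f f' f'' : ℝ → ℝ) (t : ℝ) : ℝ :=
  f t * f'' t / (2 * f' t ^ 2)

/-- One step of the scalar Halley iteration for `f`, with `f'` and `f''` given as functions. -/
noncomputable def halleyMap (f f' f'' : ℝ → ℝ) (t : ℝ) : ℝ :=
  t - 1 / (1 - convexityDegree f f' f'' t) * (f t / f' t)

variable {f f' f'' : ℝ → ℝ} {t : ℝ}

lemma convexityDegree_eq :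
    convexityDegree f f' f'' t = 2⁻¹ * ((-f' t)⁻¹ * (f'' t * ((-f' t)⁻¹ * f t))) := by
  unfold convexityDegree
  ring

lemma halleyMap_sub_self :
    halleyMap f f' f'' t - t = (1 - convexityDegree f f' f'' t)⁻¹ * ((-f' t)⁻¹ * f t) := by
  unfold halleyMap
  ring

lemma halleyMap_residual_eq (hf' : f' t ≠ 0) (hL : convexityDegree f f' f'' t ≠ 1) :
    f t + f' t * (halleyMap f f' f'' t - t) + 2⁻¹ * (f'' t * (halleyMap f f' f'' t - t) ^ 2) =
      2⁻¹ * (f'' t * convexityDegree f f' f'' t * (halleyMap f f' f'' t - t) ^ 2) := by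
  have hL' : 1 - convexityDegree f f' f'' t ≠ 0 := sub_ne_zero.2 hL.symm
  have hstep : (1 - convexityDegree f f' f'' t) * f' t * (halleyMap f f' f'' t - t) = -f t := by
    rw [halleyMap_sub_self]
    field_simp
  have hdeg : 2 * f' t ^ 2 * convexityDegree f f' f'' t = f t * f'' t := by
    unfold convexityDegree
    field_simp
  generalize halleyMap f f' f'' t - t = s at *
  generalize convexityDegree f f' f'' t = L at *
  apply mul_left_cancel₀ hf'
  linear_combination (f' t + 2⁻¹ * f'' t * s) * hstep + 2⁻¹ * s * hdeg

lemma add_sub_halleyMap {τ r : ℝ} (hf' : f' t ≠ 0) (hL : convexityDegree f f' f'' t ≠ 1)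
    (hr : f t + f' t * τ + 2⁻¹ * (f'' t * τ ^ 2) + r = 0) :
    t + τ - halleyMap f f' f'' t = (1 - convexityDegree f f' f'' t)⁻¹ * ((-f' t)⁻¹ *
      (2⁻¹ * (f'' t * ((-f' t)⁻¹ * (2⁻¹ * (f'' t * τ ^ 2) + r)) * τ) + r)) := by
  have hL' : 1 - convexityDegree f f' f'' t ≠ 0 := sub_ne_zero.2 hL.symm
  have hsplit : t + τ - halleyMap f f' f'' t = τ - (halleyMap f f' f'' t - t) := by ring
  rw [hsplit, halleyMap_sub_self, eq_inv_mul_iff_mul_eq₀ hL', mul_sub, mul_inv_cancel_left₀ hL',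
    convexityDegree]
  obtain rfl : r = -(f t + f' t * τ + 2⁻¹ * (f'' t * τ ^ 2)) := by linarith
  field_simp
  ring

end ScalarHalley

section SmaleMajorant

/-- Smale's majorizing function `f(s) = β - s + γs²/(1 - γs)`; it has a pole at `s = 1/γ`. -/
noncomputable def smaleMajorant (γ β s : ℝ) : ℝ :=
  β - s + γ * s ^ 2 / (1 - γ * s)

/-- The derivative in `s` of `smaleMajorant γ β s`. -/
noncomputable def smaleMajorantDeriv (γ s : ℝ) : ℝ :=
  -2 + 1 / (1 - γ * s) ^ 2

/-- The second derivative in `s` of `smaleMajorant γ β s`. -/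
noncomputable def smaleMajorantDeriv₂ (γ s : ℝ) : ℝ :=
  2 * γ / (1 - γ * s) ^ 3

/-- The remainder of the second-order Taylor expansion of `smaleMajorant γ β` at `t`, as a function
of the increment `τ`. -/
noncomputable def smaleRemainder (γ t τ : ℝ) : ℝ :=
  γ ^ 2 * τ ^ 3 / ((1 - γ * t) ^ 3 * (1 - γ * (t + τ)))

lemma smaleMajorant_zero (γ β : ℝ) : smaleMajorant γ β 0 = β := by simp [smaleMajorant]

lemma smaleMajorantDeriv_zero (γ : ℝ) : smaleMajorantDeriv γ 0 = -1 := by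
  norm_num [smaleMajorantDeriv]

lemma smaleMajorantDeriv₂_zero (γ : ℝ) : smaleMajorantDeriv₂ γ 0 = 2 * γ := by
  simp [smaleMajorantDeriv₂]

variable {γ : ℝ}

lemma hasDerivAt_smaleMajorant (β : ℝ) {s : ℝ} (hs : γ * s < 1) :
    HasDerivAt (smaleMajorant γ β) (smaleMajorantDeriv γ s) s := by
  have hne : 1 - γ * s ≠ 0 := (sub_pos.2 hs).ne'
  have hden : HasDerivAt (fun r => 1 - γ * r) (-γ) s := by
    simpa using! ((hasDerivAt_id s).const_mul γ).const_sub 1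
  have hnum : HasDerivAt (fun r => γ * r ^ 2) (γ * (2 * s)) s := by
    simpa using! (hasDerivAt_pow 2 s).const_mul γ
  refine (((hasDerivAt_id s).const_sub β).add (hnum.div hden hne)).congr_deriv ?_
  unfold smaleMajorantDeriv
  field_simp
  ring

lemma hasDerivAt_smaleMajorantDeriv {s : ℝ} (hs : γ * s < 1) :
    HasDerivAt (smaleMajorantDeriv γ) (smaleMajorantDeriv₂ γ s) s := by
  have hne : 1 - γ * s ≠ 0 := (sub_pos.2 hs).ne'
  have hden : HasDerivAt (fun r => 1 - γ * r) (-γ) s := by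
    simpa using! ((hasDerivAt_id s).const_mul γ).const_sub 1
  refine (((hasDerivAt_const s (1 : ℝ)).div (hden.pow 2) (pow_ne_zero 2 hne)).const_add
    (-2)).congr_deriv ?_
  simp only [smaleMajorantDeriv₂, Pi.pow_apply]
  field_simp
  ring

lemma smaleMajorant_add (β : ℝ) {t τ : ℝ} (ht : γ * t < 1) (htτ : γ * (t + τ) < 1) :
    smaleMajorant γ β (t + τ) = smaleMajorant γ β t + smaleMajorantDeriv γ t * τ +
      2⁻¹ * (smaleMajorantDeriv₂ γ t * τ ^ 2) + smaleRemainder γ t τ := by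
  have h1 : 1 - t * γ ≠ 0 := by linarith
  have h2 : 1 - (t + τ) * γ ≠ 0 := by linarith
  unfold smaleMajorant smaleMajorantDeriv smaleMajorantDeriv₂ smaleRemainder
  field_simp
  ring

lemma smaleMajorantDeriv₂_pos (hγ : 0 < γ) {s : ℝ} (hs : γ * s < 1) :
    0 < smaleMajorantDeriv₂ γ s :=
  div_pos (by positivity) (pow_pos (sub_pos.2 hs) 3)

lemma smaleMajorantDeriv₂_add_sub_le (hγ : 0 < γ) {s t d : ℝ} (hst : s ≤ t) (hd : 0 ≤ d)
    (htd : γ * (t + d) < 1) :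
    smaleMajorantDeriv₂ γ (s + d) - smaleMajorantDeriv₂ γ s ≤
      smaleMajorantDeriv₂ γ (t + d) - smaleMajorantDeriv₂ γ t := by
  have factored : ∀ r ≤ t, smaleMajorantDeriv₂ γ (r + d) - smaleMajorantDeriv₂ γ r =
      2 * γ * (γ * d * (1 - γ * (r + d))⁻¹ * (1 - γ * r)⁻¹ * ((1 - γ * (r + d))⁻¹ ^ 2 +
        (1 - γ * (r + d))⁻¹ * (1 - γ * r)⁻¹ + (1 - γ * r)⁻¹ ^ 2)) := by
    intro r hr
    have h1 : 1 - γ * (r + d) ≠ 0 := by nlinarith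
    have h2 : 1 - γ * r ≠ 0 := by nlinarith
    have hd' : γ * d = (1 - γ * r) - (1 - γ * (r + d)) := by ring
    rw [hd', smaleMajorantDeriv₂, smaleMajorantDeriv₂]
    generalize 1 - γ * (r + d) = w at *
    field_simp
    ring
  have : 0 < 1 - γ * (t + d) := sub_pos.2 htd
  have ht : 0 < 1 - γ * t := by nlinarith
  have hsd : 0 < 1 - γ * (s + d) := by nlinarith
  have hs : 0 < 1 - γ * s := by nlinarith
  rw [factored s hst, factored t le_rfl]
  gcongr

lemma smaleRemainder_nonneg (hγ : 0 < γ) {t τ : ℝ} (hτ : 0 ≤ τ) (htτ : γ * (t + τ) < 1) :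
    0 ≤ smaleRemainder γ t τ := by
  have : 0 < 1 - γ * (t + τ) := sub_pos.2 htτ
  have : 0 < 1 - γ * t := by nlinarith
  unfold smaleRemainder
  positivity

lemma smaleRemainder_le_smaleRemainder (hγ : 0 < γ) {t σ τ : ℝ} (hσ : 0 ≤ σ) (hστ : σ ≤ τ)
    (htτ : γ * (t + τ) < 1) : smaleRemainder γ t σ ≤ smaleRemainder γ t τ := by
  have : 0 < 1 - γ * (t + τ) := sub_pos.2 htτ
  have : 0 < 1 - γ * t := by nlinarith
  have : 0 ≤ τ := hσ.trans hστ
  unfold smaleRemainder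
  gcongr

lemma smaleRemainder_mul_le (hγ : 0 < γ) {t τ q : ℝ} (hτ : 0 ≤ τ) (htτ : γ * (t + τ) < 1)
    (hq : 0 ≤ q) (hq1 : q ≤ 1) : smaleRemainder γ t (q * τ) ≤ q ^ 3 * smaleRemainder γ t τ := by
  have hle : q * τ ≤ τ := mul_le_of_le_one_left hτ hq1
  have : 0 < 1 - γ * (t + τ) := sub_pos.2 htτ
  have : 0 < 1 - γ * t := by nlinarith
  have hscale : smaleRemainder γ t (q * τ) =
      q ^ 3 * (γ ^ 2 * τ ^ 3 / ((1 - γ * t) ^ 3 * (1 - γ * (t + q * τ)))) := by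
    unfold smaleRemainder
    ring
  rw [hscale, smaleRemainder]
  gcongr

end SmaleMajorant

/-- The degree of logarithmic convexity of `smaleMajorant γ β`. -/
noncomputable def smaleDegree (γ β : ℝ) : ℝ → ℝ :=
  convexityDegree (smaleMajorant γ β) (smaleMajorantDeriv γ) (smaleMajorantDeriv₂ γ)

/-- The scalar Halley step for `smaleMajorant γ β`. -/
noncomputable def smaleHalley (γ β : ℝ) : ℝ → ℝ :=
  halleyMap (smaleMajorant γ β) (smaleMajorantDeriv γ) (smaleMajorantDeriv₂ γ)

/-- The majorizing sequence `(t_k)`. -/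
noncomputable def smaleSeq (γ β : ℝ) (k : ℕ) : ℝ :=
  (smaleHalley γ β)^[k] 0

lemma smaleSeq_succ (γ β : ℝ) (k : ℕ) :
    smaleSeq γ β (k + 1) = smaleHalley γ β (smaleSeq γ β k) :=
  Function.iterate_succ_apply' _ _ _

lemma eq_smaleSeq {γ β : ℝ} {t : ℕ → ℝ} (ht₀ : t 0 = 0)
    (ht : ∀ k, t (k + 1) = smaleHalley γ β (t k)) : t = smaleSeq γ β := by
  funext k
  induction k with
  | zero => exact ht₀
  | succ k ih => rw [ht, ih, smaleSeq_succ]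

/-- `T < S` are the zeros `t*` and `t**` of `smaleMajorant γ β`, both to the left of the pole `1/γ`.
The last two fields express that they are the roots of `2γt² - (1 + βγ)t + β`. -/
structure SmaleZeros (γ β T S : ℝ) : Prop where
  gamma_pos : 0 < γ
  fst_pos : 0 < T
  fst_lt_snd : T < S
  mul_snd_lt_one : γ * S < 1
  add_eq : 2 * γ * (T + S) = 1 + β * γ
  mul_eq : 2 * γ * (T * S) = β

lemma smaleZeros_of_lt {γ β : ℝ} (hγ : 0 < γ) (hβ : 0 < β) (hα : β * γ < 3 - 2 * √2) :
    SmaleZeros γ β ((1 + β * γ - √((1 + β * γ) ^ 2 - 8 * (β * γ))) / (4 * γ))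
      ((1 + β * γ + √((1 + β * γ) ^ 2 - 8 * (β * γ))) / (4 * γ)) := by
  have hαpos : 0 < β * γ := mul_pos hβ hγ
  have hsqrt2 : √2 ^ 2 = 2 := Real.sq_sqrt (by norm_num)
  have hsqrt2_gt : 1 < √2 := Real.lt_sqrt_of_sq_lt (by norm_num)
  have : β * γ < 1 := by linarith
  -- The discriminant is `(3 - 2√2 - α)(3 + 2√2 - α)`.
  have hdisc : 0 < (1 + β * γ) ^ 2 - 8 * (β * γ) := by nlinarith
  have hsq := Real.sq_sqrt hdisc.le
  have hδ := Real.sqrt_pos.2 hdisc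
  set δ := √((1 + β * γ) ^ 2 - 8 * (β * γ))
  have hδ_lt : δ < 1 + β * γ := by nlinarith
  have : δ < 3 - β * γ := by nlinarith
  refine ⟨hγ, div_pos (by linarith) (by positivity), ?_, ?_, ?_, ?_⟩
  · gcongr; linarith
  · field_simp; linarith
  · field_simp; ring
  · field_simp; linarith

namespace SmaleZeros

variable {γ β T S t : ℝ} (h : SmaleZeros γ β T S)
include h

lemma mul_lt_one (ht : t ≤ T) : γ * t < 1 :=
  (mul_le_mul_of_nonneg_left (ht.trans h.fst_lt_snd.le) h.gamma_pos.le).trans_lt h.mul_snd_lt_one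

lemma one_sub_mul_one_sub : (1 - γ * T) * (1 - γ * S) = 2⁻¹ := by
  linear_combination (γ / 2) * h.mul_eq - h.add_eq / 2

lemma one_lt_two_mul_sq (ht : t ≤ T) : 1 < 2 * (1 - γ * t) ^ 2 := by
  have hw : 0 < 1 - γ * S := sub_pos.2 h.mul_snd_lt_one
  have hwu : 1 - γ * S < 1 - γ * T := by gcongr; exacts [h.gamma_pos, h.fst_lt_snd]
  have huv : 1 - γ * T ≤ 1 - γ * t := by gcongr; exact h.gamma_pos.le
  nlinarith [h.one_sub_mul_one_sub]

lemma smaleMajorant_eq (ht : γ * t < 1) :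
    smaleMajorant γ β t = 2 * γ * (T - t) * (S - t) / (1 - γ * t) := by
  have hne : 1 - γ * t ≠ 0 := (sub_pos.2 ht).ne'
  rw [smaleMajorant, eq_div_iff hne, add_mul, div_mul_cancel₀ _ hne]
  linear_combination t * h.add_eq - h.mul_eq

lemma smaleMajorant_fst : smaleMajorant γ β T = 0 := by
  simp [h.smaleMajorant_eq (h.mul_lt_one le_rfl)]

lemma smaleMajorant_pos (ht : t < T) : 0 < smaleMajorant γ β t := by
  rw [h.smaleMajorant_eq (h.mul_lt_one ht.le)]
  have := h.gamma_pos
  exact div_pos (mul_pos (mul_pos (by positivity) (sub_pos.2 ht))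
    (sub_pos.2 (ht.trans h.fst_lt_snd))) (sub_pos.2 (h.mul_lt_one ht.le))

lemma le_fst_of_smaleMajorant_nonneg (ht : t < S) (hf : 0 ≤ smaleMajorant γ β t) : t ≤ T := by
  have hγt : γ * t < 1 := (mul_lt_mul_of_pos_left ht h.gamma_pos).trans h.mul_snd_lt_one
  have hγ := h.gamma_pos
  rw [h.smaleMajorant_eq hγt, le_div_iff₀ (sub_pos.2 hγt), zero_mul,
    mul_nonneg_iff_of_pos_right (sub_pos.2 ht), mul_nonneg_iff_of_pos_left (by positivity)] at hf
  linarith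

lemma gap_mul_le_smaleMajorant (ht₀ : 0 ≤ t) (ht : t ≤ T) :
    2 * γ * (S - T) * (T - t) ≤ smaleMajorant γ β t := by
  have hγ := h.gamma_pos
  have hγt := sub_pos.2 (h.mul_lt_one ht)
  rw [h.smaleMajorant_eq (h.mul_lt_one ht), le_div_iff₀ hγt]
  have hle : 1 - γ * t ≤ 1 := by linarith [mul_nonneg hγ.le ht₀]
  have hS : S - T ≤ S - t := by linarith
  have : 0 ≤ T - t := sub_nonneg.2 ht
  have hST : 0 ≤ S - T := sub_nonneg.2 h.fst_lt_snd.le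
  calc 2 * γ * (S - T) * (T - t) * (1 - γ * t) ≤ 2 * γ * (S - T) * (T - t) * 1 := by gcongr
    _ ≤ 2 * γ * (S - t) * (T - t) * 1 := by gcongr
    _ = 2 * γ * (T - t) * (S - t) := by ring

lemma neg_smaleMajorantDeriv_eq (ht : t ≤ T) :
    -smaleMajorantDeriv γ t = (2 * (1 - γ * t) ^ 2 - 1) / (1 - γ * t) ^ 2 := by
  have hne : 1 - γ * t ≠ 0 := (sub_pos.2 (h.mul_lt_one ht)).ne'
  unfold smaleMajorantDeriv
  field_simp
  ring

lemma smaleMajorantDeriv_neg (ht : t ≤ T) : smaleMajorantDeriv γ t < 0 := by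
  rw [← neg_pos, h.neg_smaleMajorantDeriv_eq ht]
  exact div_pos (sub_pos.2 (h.one_lt_two_mul_sq ht))
    (pow_pos (sub_pos.2 (h.mul_lt_one ht)) 2)

lemma neg_smaleMajorantDeriv_le_one (ht₀ : 0 ≤ t) (ht : t ≤ T) : -smaleMajorantDeriv γ t ≤ 1 := by
  have hpos := sub_pos.2 (h.mul_lt_one ht)
  have hle : 1 - γ * t ≤ 1 := by linarith [mul_nonneg h.gamma_pos.le ht₀]
  rw [h.neg_smaleMajorantDeriv_eq ht, div_le_one (by positivity)]
  nlinarith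

lemma sq_le_mul_cubic (ht : t ≤ T) : (2 * (1 - γ * T) ^ 2 - 1) ^ 2 ≤
    (1 - γ * T) * (4 * (1 - γ * t) ^ 3 - 6 * (1 - γ * t) + 3 - β * γ) := by
  have huv : 1 - γ * T ≤ 1 - γ * t := by gcongr; exact h.gamma_pos.le
  have hu := sub_pos.2 (h.mul_lt_one le_rfl)
  have hprod := h.one_sub_mul_one_sub
  have hsum : 3 - β * γ = 2 * ((1 - γ * T) + (1 - γ * S)) := by linarith [h.add_eq]
  have hsq := h.one_lt_two_mul_sq le_rfl
  rw [add_sub_assoc, hsum]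
  generalize 1 - γ * T = u at *
  generalize 1 - γ * S = w at *
  generalize 1 - γ * t = v at *
  have hfactor : u * (4 * v ^ 3 - 6 * v + 2 * (u + w)) - (2 * u ^ 2 - 1) ^ 2 =
      2 * u * (v - u) * (2 * (v ^ 2 + u * v + u ^ 2) - 3) := by
    linear_combination 2 * hprod
  have hquad : 0 ≤ 2 * (v ^ 2 + u * v + u ^ 2) - 3 := by nlinarith
  rw [← sub_nonneg, hfactor]
  exact mul_nonneg (mul_nonneg (by positivity) (sub_nonneg.2 huv)) hquad

lemma cubic_pos (ht : t ≤ T) : 0 < 4 * (1 - γ * t) ^ 3 - 6 * (1 - γ * t) + 3 - β * γ :=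
  pos_of_mul_pos_right ((pow_pos (sub_pos.2 (h.one_lt_two_mul_sq le_rfl)) 2).trans_le
    (h.sq_le_mul_cubic ht)) (sub_pos.2 (h.mul_lt_one le_rfl)).le

lemma smaleDegree_eq (ht : t ≤ T) :
    smaleDegree γ β t = γ * (2 * γ * (T - t) * (S - t)) / (2 * (1 - γ * t) ^ 2 - 1) ^ 2 := by
  have hne : 1 - γ * t ≠ 0 := (sub_pos.2 (h.mul_lt_one ht)).ne'
  have hne' : 2 * (1 - γ * t) ^ 2 - 1 ≠ 0 := (sub_pos.2 (h.one_lt_two_mul_sq ht)).ne'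
  rw [smaleDegree, convexityDegree, ← neg_sq, h.neg_smaleMajorantDeriv_eq ht,
    h.smaleMajorant_eq (h.mul_lt_one ht), smaleMajorantDeriv₂]
  generalize 1 - γ * t = v at *
  field_simp

lemma one_sub_smaleDegree (ht : t ≤ T) : 1 - smaleDegree γ β t = (1 - γ * t) *
    (4 * (1 - γ * t) ^ 3 - 6 * (1 - γ * t) + 3 - β * γ) / (2 * (1 - γ * t) ^ 2 - 1) ^ 2 := by
  have hne : (2 * (1 - γ * t) ^ 2 - 1) ^ 2 ≠ 0 :=
    pow_ne_zero 2 (sub_pos.2 (h.one_lt_two_mul_sq ht)).ne'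
  rw [h.smaleDegree_eq ht, one_sub_div hne]
  congr 1
  linear_combination γ * t * h.add_eq - γ * h.mul_eq

lemma smaleDegree_lt_one (ht : t ≤ T) : smaleDegree γ β t < 1 := by
  rw [← sub_pos, h.one_sub_smaleDegree ht]
  exact div_pos (mul_pos (sub_pos.2 (h.mul_lt_one ht)) (h.cubic_pos ht))
    (pow_pos (sub_pos.2 (h.one_lt_two_mul_sq ht)) 2)

lemma smaleDegree_nonneg (ht : t < T) : 0 ≤ smaleDegree γ β t :=
  div_nonneg (mul_nonneg (h.smaleMajorant_pos ht).le
    (smaleMajorantDeriv₂_pos h.gamma_pos (h.mul_lt_one ht.le)).le) (by positivity)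

lemma fst_sub_smaleHalley (ht : t ≤ T) : T - smaleHalley γ β t = 4 * (1 - γ * S) * γ ^ 2 *
    (T - t) ^ 3 / (4 * (1 - γ * t) ^ 3 - 6 * (1 - γ * t) + 3 - β * γ) := by
  have hγt := h.mul_lt_one ht
  have hne : 1 - γ * t ≠ 0 := (sub_pos.2 hγt).ne'
  have hne' : 2 * (1 - γ * t) ^ 2 - 1 ≠ 0 := (sub_pos.2 (h.one_lt_two_mul_sq ht)).ne'
  have hP := (h.cubic_pos ht).ne'
  have hstep : smaleHalley γ β t - t = (2 * (1 - γ * t) ^ 2 - 1) * (2 * γ * (T - t) * (S - t)) /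
      (4 * (1 - γ * t) ^ 3 - 6 * (1 - γ * t) + 3 - β * γ) := by
    rw [smaleHalley, halleyMap_sub_self, ← smaleDegree, h.one_sub_smaleDegree ht,
      h.neg_smaleMajorantDeriv_eq ht, h.smaleMajorant_eq hγt]
    generalize 4 * (1 - γ * t) ^ 3 - 6 * (1 - γ * t) + 3 - β * γ = P at *
    generalize 1 - γ * t = v at *
    field_simp
  rw [← sub_sub_sub_cancel_right T _ t, hstep, sub_div' hP]
  congr 1
  linear_combination (2 * (1 - γ * t) - (1 - γ * T)) * (4 * (T - t)) * h.one_sub_mul_one_sub +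
    (T - t) * h.add_eq

lemma fst_sub_smaleHalley_eq_taylor (ht : t ≤ T) : T - smaleHalley γ β t =
    (1 - smaleDegree γ β t)⁻¹ * ((-smaleMajorantDeriv γ t)⁻¹ *
      (2⁻¹ * (smaleMajorantDeriv₂ γ t * ((-smaleMajorantDeriv γ t)⁻¹ *
        (2⁻¹ * (smaleMajorantDeriv₂ γ t * (T - t) ^ 2) + smaleRemainder γ t (T - t))) * (T - t)) +
          smaleRemainder γ t (T - t))) := by
  have hγT : γ * (t + (T - t)) < 1 := by rw [add_sub_cancel]; exact h.mul_lt_one le_rfl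
  have hr := smaleMajorant_add β (h.mul_lt_one ht) hγT
  rw [add_sub_cancel, h.smaleMajorant_fst] at hr
  have heq := add_sub_halleyMap (h.smaleMajorantDeriv_neg ht).ne (h.smaleDegree_lt_one ht).ne
    hr.symm
  rwa [add_sub_cancel] at heq

lemma smaleHalley_lt_fst (ht : t < T) : smaleHalley γ β t < T := by
  rw [← sub_pos, h.fst_sub_smaleHalley ht.le]
  have hγ := h.gamma_pos
  have hw := sub_pos.2 h.mul_snd_lt_one
  have := sub_pos.2 ht
  exact div_pos (by positivity) (h.cubic_pos ht.le)

lemma fst_sub_smaleHalley_le (ht : t ≤ T) :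
    T - smaleHalley γ β t ≤ 2 * γ ^ 2 / (2 * (1 - γ * T) ^ 2 - 1) ^ 2 * (T - t) ^ 3 := by
  have hu := sub_pos.2 (h.mul_lt_one le_rfl)
  have := h.cubic_pos ht
  have hden : 0 < (2 * (1 - γ * T) ^ 2 - 1) ^ 2 :=
    pow_pos (sub_pos.2 (h.one_lt_two_mul_sq le_rfl)) 2
  have := sub_nonneg.2 ht
  have hw : 1 - γ * S = 2⁻¹ / (1 - γ * T) := by
    rw [eq_div_iff hu.ne', mul_comm, h.one_sub_mul_one_sub]
  calc T - smaleHalley γ β t = 2 * γ ^ 2 / ((1 - γ * T) *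
        (4 * (1 - γ * t) ^ 3 - 6 * (1 - γ * t) + 3 - β * γ)) * (T - t) ^ 3 := by
        rw [h.fst_sub_smaleHalley ht, hw]
        field_simp
        norm_num
    _ ≤ 2 * γ ^ 2 / (2 * (1 - γ * T) ^ 2 - 1) ^ 2 * (T - t) ^ 3 := by
        gcongr
        exact h.sq_le_mul_cubic ht

lemma smaleMajorant_le_smaleHalley_sub_self (ht₀ : 0 ≤ t) (ht : t < T) :
    smaleMajorant γ β t ≤ smaleHalley γ β t - t := by
  have hf := (h.smaleMajorant_pos ht).le
  have hL : 1 ≤ (1 - smaleDegree γ β t)⁻¹ :=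
    (one_le_inv₀ (sub_pos.2 (h.smaleDegree_lt_one ht.le))).2 (by linarith [h.smaleDegree_nonneg ht])
  have hf' : 1 ≤ (-smaleMajorantDeriv γ t)⁻¹ :=
    (one_le_inv₀ (neg_pos.2 (h.smaleMajorantDeriv_neg ht.le))).2
      (h.neg_smaleMajorantDeriv_le_one ht₀ ht.le)
  rw [smaleHalley, halleyMap_sub_self]
  exact (le_mul_of_one_le_left hf hf').trans
    (le_mul_of_one_le_left (mul_nonneg (zero_le_one.trans hf') hf) hL)

lemma lt_smaleHalley (ht₀ : 0 ≤ t) (ht : t < T) : t < smaleHalley γ β t :=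
  sub_pos.1 ((h.smaleMajorant_pos ht).trans_le (h.smaleMajorant_le_smaleHalley_sub_self ht₀ ht))

lemma smaleSeq_mem (k : ℕ) : smaleSeq γ β k ∈ Ico 0 T := by
  induction k with
  | zero => exact ⟨le_rfl, h.fst_pos⟩
  | succ k ih =>
    rw [smaleSeq_succ]
    exact ⟨ih.1.trans (h.lt_smaleHalley ih.1 ih.2).le, h.smaleHalley_lt_fst ih.2⟩

lemma tendsto_smaleSeq : Tendsto (smaleSeq γ β) atTop (𝓝 T) := by
  have hmem := h.smaleSeq_mem
  have hsucc := smaleSeq_succ γ β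
  set t := smaleSeq γ β
  have hmono : Monotone t := monotone_nat_of_le_succ fun k =>
    (hsucc k).symm ▸ (h.lt_smaleHalley (hmem k).1 (hmem k).2).le
  obtain ⟨l, hl⟩ : ∃ l, Tendsto t atTop (𝓝 l) :=
    ⟨_, tendsto_atTop_ciSup hmono ⟨T, by rintro _ ⟨k, rfl⟩; exact (hmem k).2.le⟩⟩
  have hincr : Tendsto (fun k => t (k + 1) - t k) atTop (𝓝 0) := by
    simpa using (hl.comp (tendsto_add_atTop_nat 1)).sub hl
  have hgap : 0 < 2 * γ * (S - T) := mul_pos (mul_pos two_pos h.gamma_pos) (sub_pos.2 h.fst_lt_snd)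
  have hlim : Tendsto (fun k => T - t k) atTop (𝓝 0) := by
    refine squeeze_zero (fun k => (sub_pos.2 (hmem k).2).le) (fun k => ?_)
      (by simpa using hincr.div_const (2 * γ * (S - T)))
    rw [le_div_iff₀' hgap, hsucc]
    exact (h.gap_mul_le_smaleMajorant (hmem k).1 (hmem k).2.le).trans
      (h.smaleMajorant_le_smaleHalley_sub_self (hmem k).1 (hmem k).2)
  simpa using hlim.const_sub T

end SmaleZeros

section SmaleGammaCondition

variable {X : Type*} [NormedAddCommGroup X] [NormedSpace ℝ X]

/-- The `γ`-condition at `x₀` for a map `G` with derivatives `G'` and `G''`, normalized so that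
`G'(x₀) = I` (for an operator `F` take `G = F'(x₀)⁻¹ ∘ F`). The right-hand side of the bound on
`G''(y) - G''(x)` is written as an increment of the second derivative of `smaleMajorant`. -/
structure SmaleGammaCondition (G : X → X) (G' : X → X →L[ℝ] X) (G'' : X → X →L[ℝ] X →L[ℝ] X)
    (x₀ : X) (γ β : ℝ) : Prop where
  gamma_pos : 0 < γ
  hasFDerivAt : ∀ x, γ * ‖x - x₀‖ < 1 → HasFDerivAt G (G' x) x
  hasFDerivAt_deriv : ∀ x, γ * ‖x - x₀‖ < 1 → HasFDerivAt G' (G'' x) x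
  norm_deriv₂_sub_le : ∀ x y, γ * (‖x - x₀‖ + ‖y - x‖) < 1 →
    ‖G'' y - G'' x‖ ≤
      smaleMajorantDeriv₂ γ (‖x - x₀‖ + ‖y - x‖) - smaleMajorantDeriv₂ γ ‖x - x₀‖
  deriv_base : G' x₀ = ContinuousLinearMap.id ℝ X
  norm_base_le : ‖G x₀‖ ≤ β
  norm_deriv₂_base_le : ‖G'' x₀‖ ≤ 2 * γ

namespace SmaleGammaCondition

variable {G : X → X} {G' : X → X →L[ℝ] X} {G'' : X → X →L[ℝ] X →L[ℝ] X} {x₀ x y : X}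
  {γ β T S t : ℝ} (hG : SmaleGammaCondition G G' G'' x₀ γ β)
include hG

lemma norm_deriv₂_sub_le_of_le (hx : ‖x - x₀‖ ≤ t) (hxy : γ * (t + ‖y - x‖) < 1) :
    ‖G'' y - G'' x‖ ≤ smaleMajorantDeriv₂ γ (t + ‖y - x‖) - smaleMajorantDeriv₂ γ t :=
  (hG.norm_deriv₂_sub_le x y
    ((mul_le_mul_of_nonneg_left (by gcongr) hG.gamma_pos.le).trans_lt hxy)).trans
    (smaleMajorantDeriv₂_add_sub_le hG.gamma_pos hx (norm_nonneg _) hxy)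

lemma mul_norm_segment_lt_one {d : X} (hx : ‖x - x₀‖ ≤ t) (hd : γ * (t + ‖d‖) < 1) {s : ℝ}
    (hs : s ∈ Icc (0 : ℝ) 1) : γ * ‖x + s • d - x₀‖ < 1 := by
  refine (mul_le_mul_of_nonneg_left ?_ hG.gamma_pos.le).trans_lt hd
  have hsd : ‖s • d‖ ≤ ‖d‖ := by
    rw [norm_smul, Real.norm_of_nonneg hs.1]
    exact mul_le_of_le_one_left (norm_nonneg d) hs.2
  rw [add_sub_right_comm]
  exact norm_add_le_of_le hx hsd

lemma norm_taylor_le (hx : ‖x - x₀‖ ≤ t) (hxy : γ * (t + ‖y - x‖) < 1) :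
    ‖G y - G x - G' x (y - x) - (2⁻¹ : ℝ) • G'' x (y - x) (y - x)‖ ≤
      smaleRemainder γ t ‖y - x‖ := by
  obtain ⟨d, rfl⟩ : ∃ d, y = x + d := ⟨y - x, by abel⟩
  rw [add_sub_cancel_left] at hxy ⊢
  have hγ := hG.gamma_pos
  have hγt : γ * t < 1 := by nlinarith [norm_nonneg d]
  have hmem := fun s (hs : s ∈ Icc (0 : ℝ) 1) => hG.mul_norm_segment_lt_one hx hxy hs
  have hle : ∀ s ∈ Icc (0 : ℝ) 1, γ * (t + s * ‖d‖) < 1 := fun s hs => by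
    nlinarith [mul_le_of_le_one_left (norm_nonneg d) hs.2]
  have h := norm_segment_taylor_two_le
    (fun s hs => hG.hasFDerivAt _ (hmem s hs)) (fun s hs => hG.hasFDerivAt_deriv _ (hmem s hs))
    (fun s hs => hasDerivAt_smaleMajorant 0 (hle s hs))
    (fun s hs => hasDerivAt_smaleMajorantDeriv (hle s hs))
    (fun s hs => by
      have hnorm : ‖x + s • d - x‖ = s * ‖d‖ := by
        rw [add_sub_cancel_left, norm_smul, Real.norm_of_nonneg hs.1]
      have := hG.norm_deriv₂_sub_le_of_le (y := x + s • d) hx (by rw [hnorm]; exact hle s hs)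
      rwa [hnorm] at this)
  linarith [smaleMajorant_add 0 hγt hxy]

lemma norm_deriv₂_le (hx : ‖x - x₀‖ ≤ t) (ht : γ * t < 1) :
    ‖G'' x‖ ≤ smaleMajorantDeriv₂ γ t := by
  have hγ := hG.gamma_pos
  have : 0 < 1 - γ * t := sub_pos.2 ht
  have hx' : γ * ‖x - x₀‖ < 1 := (mul_le_mul_of_nonneg_left hx hγ.le).trans_lt ht
  calc ‖G'' x‖ ≤ ‖G'' x - G'' x₀‖ + ‖G'' x₀‖ := norm_le_norm_sub_add (G'' x) (G'' x₀)
    _ ≤ smaleMajorantDeriv₂ γ (0 + ‖x - x₀‖) - smaleMajorantDeriv₂ γ 0 + 2 * γ :=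
        add_le_add (hG.norm_deriv₂_sub_le_of_le (by simp) (by simpa using hx'))
          hG.norm_deriv₂_base_le
    _ = smaleMajorantDeriv₂ γ ‖x - x₀‖ := by rw [zero_add, smaleMajorantDeriv₂_zero, sub_add_cancel]
    _ ≤ smaleMajorantDeriv₂ γ t := by unfold smaleMajorantDeriv₂; gcongr

lemma norm_id_sub_deriv_le (hx : ‖x - x₀‖ ≤ t) (ht : γ * t < 1) :
    ‖ContinuousLinearMap.id ℝ X - G' x‖ ≤ smaleMajorantDeriv γ t + 1 := by
  have hγ := hG.gamma_pos
  have : 0 < 1 - γ * t := sub_pos.2 ht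
  obtain ⟨d, rfl⟩ : ∃ d, x = x₀ + d := ⟨x - x₀, by abel⟩
  rw [add_sub_cancel_left] at hx
  have hd : γ * (0 + ‖d‖) < 1 := by rw [zero_add]; nlinarith
  have hle : ∀ s ∈ Icc (0 : ℝ) 1, γ * (0 + s * ‖d‖) < 1 := fun s hs => by
    nlinarith [mul_le_of_le_one_left (norm_nonneg d) hs.2]
  have h := norm_segment_sub_le (x := x₀) (t := 0)
    (fun s hs => hG.hasFDerivAt_deriv _ (hG.mul_norm_segment_lt_one (by simp) hd hs))
    (fun s hs => hasDerivAt_smaleMajorantDeriv (hle s hs))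
    (fun s hs => hG.norm_deriv₂_le (by
      simp [norm_smul, Real.norm_of_nonneg hs.1]) (hle s hs))
  calc ‖ContinuousLinearMap.id ℝ X - G' (x₀ + d)‖ = ‖G' (x₀ + d) - G' x₀‖ := by
        rw [hG.deriv_base, norm_sub_rev]
    _ ≤ smaleMajorantDeriv γ ‖d‖ - smaleMajorantDeriv γ 0 := by rwa [zero_add] at h
    _ = smaleMajorantDeriv γ ‖d‖ + 1 := by
        rw [smaleMajorantDeriv_zero, sub_neg_eq_add]
    _ ≤ smaleMajorantDeriv γ t + 1 := by unfold smaleMajorantDeriv; gcongr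

variable [CompleteSpace X] (h : SmaleZeros γ β T S)
include h

lemma exists_isHalleyStep (ht : t < T) (hx : ‖x - x₀‖ ≤ t) (hGx : ‖G x‖ ≤ smaleMajorant γ β t) :
    ∃ e m, IsHalleyStep G G' G'' x (halleyNext G G' G'' x) e m ∧
      ‖(e.symm : X →L[ℝ] X)‖ ≤ (-smaleMajorantDeriv γ t)⁻¹ ∧
      ‖convexityOperator (e.symm : X →L[ℝ] X) (G'' x) (G x)‖ ≤ smaleDegree γ β t ∧
      ‖(m.symm : X →L[ℝ] X)‖ ≤ (1 - smaleDegree γ β t)⁻¹ := by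
  obtain ⟨e, he, hesymm⟩ := exists_equiv_id_sub
    (hG.norm_id_sub_deriv_le hx (h.mul_lt_one ht.le))
    (add_lt_iff_neg_right _ |>.2 (h.smaleMajorantDeriv_neg ht.le))
  rw [sub_sub_cancel] at he
  rw [sub_add_cancel_right] at hesymm
  have hL : ‖convexityOperator (e.symm : X →L[ℝ] X) (G'' x) (G x)‖ ≤ smaleDegree γ β t :=
    (norm_convexityOperator_le hesymm (hG.norm_deriv₂_le hx (h.mul_lt_one ht.le))
      hGx).trans_eq convexityDegree_eq.symm
  obtain ⟨m, hm, hmsymm⟩ := exists_equiv_id_sub hL (h.smaleDegree_lt_one ht.le)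
  exact ⟨e, m, isHalleyStep_halleyNext he hm, hesymm, hL, hmsymm⟩

lemma norm_halleyNext_sub_le (ht : t < T) (hx : ‖x - x₀‖ ≤ t)
    (hGx : ‖G x‖ ≤ smaleMajorant γ β t) :
    ‖halleyNext G G' G'' x - x‖ ≤ smaleHalley γ β t - t := by
  obtain ⟨e, m, hstep, he, -, hm⟩ := hG.exists_isHalleyStep h ht hx hGx
  exact (hstep.norm_step_le he hm hGx).trans_eq halleyMap_sub_self.symm

lemma norm_apply_halleyNext_le (ht : t < T) (hx : ‖x - x₀‖ ≤ t)
    (hGx : ‖G x‖ ≤ smaleMajorant γ β t) :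
    ‖G (halleyNext G G' G'' x)‖ ≤ smaleMajorant γ β (smaleHalley γ β t) := by
  obtain ⟨e, m, hstep, -, hL, -⟩ := hG.exists_isHalleyStep h ht hx hGx
  have hs := hG.norm_halleyNext_sub_le h ht hx hGx
  have hγs : γ * (t + (smaleHalley γ β t - t)) < 1 := by
    rw [add_sub_cancel]; exact h.mul_lt_one (h.smaleHalley_lt_fst ht).le
  have hγt := h.mul_lt_one ht.le
  have hadd := smaleMajorant_add β hγt hγs
  rw [smaleHalley, halleyMap_residual_eq (h.smaleMajorantDeriv_neg ht.le).ne
    (h.smaleDegree_lt_one ht.le).ne, ← smaleHalley, ← smaleDegree, add_sub_cancel] at hadd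
  rw [hadd]
  set y := halleyNext G G' G'' x
  have hb := (smaleMajorantDeriv₂_pos h.gamma_pos hγt).le
  have hL₀ := h.smaleDegree_nonneg ht
  calc ‖G y‖ = ‖(G x + G' x (y - x) + (2⁻¹ : ℝ) • G'' x (y - x) (y - x)) +
        (G y - G x - G' x (y - x) - (2⁻¹ : ℝ) • G'' x (y - x) (y - x))‖ := by congr 1; abel
    _ ≤ 2⁻¹ * (smaleMajorantDeriv₂ γ t * smaleDegree γ β t * ‖y - x‖ ^ 2) +
        smaleRemainder γ t ‖y - x‖ :=
        norm_add_le_of_le (hstep.norm_residual_le (hG.norm_deriv₂_le hx hγt) hL)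
          (hG.norm_taylor_le hx (by nlinarith [h.gamma_pos]))
    _ ≤ _ := by
        gcongr
        exact smaleRemainder_le_smaleRemainder h.gamma_pos (norm_nonneg _) hs hγs

lemma norm_sub_halleyNext_le (ht : t < T) (hx : ‖x - x₀‖ ≤ t)
    (hGx : ‖G x‖ ≤ smaleMajorant γ β t) (hy : G y = 0) (hyx : ‖y - x‖ ≤ T - t) :
    ‖y - halleyNext G G' G'' x‖ ≤ (T - smaleHalley γ β t) * (‖y - x‖ / (T - t)) ^ 3 := by
  obtain ⟨e, m, hstep, he, -, hm⟩ := hG.exists_isHalleyStep h ht hx hGx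
  have hγt := h.mul_lt_one ht.le
  have hTt : 0 < T - t := sub_pos.2 ht
  have hγT : γ * (t + (T - t)) < 1 := by rw [add_sub_cancel]; exact h.mul_lt_one le_rfl
  obtain ⟨q, hq⟩ : ∃ q, ‖y - x‖ = q * (T - t) := ⟨_, (div_mul_cancel₀ _ hTt.ne').symm⟩
  have hq₀ : 0 ≤ q := nonneg_of_mul_nonneg_left (hq ▸ norm_nonneg _) hTt
  have hq₁ : q ≤ 1 := (mul_le_iff_le_one_left hTt).1 (hq ▸ hyx)
  have hrem : ‖G y - G x - G' x (y - x) - (2⁻¹ : ℝ) • G'' x (y - x) (y - x)‖ ≤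
      q ^ 3 * smaleRemainder γ t (T - t) :=
    (hG.norm_taylor_le hx (by nlinarith [h.gamma_pos])).trans
      (hq ▸ smaleRemainder_mul_le h.gamma_pos hTt.le hγT hq₀ hq₁)
  have hbound := hstep.norm_sub_le_of_residual he hm (hG.norm_deriv₂_le hx hγt)
    (by rw [hy]; abel) hrem
  have hκ : 0 ≤ (-smaleMajorantDeriv γ t)⁻¹ :=
    inv_nonneg.2 (neg_nonneg.2 (h.smaleMajorantDeriv_neg ht.le).le)
  have hμ : 0 ≤ (1 - smaleDegree γ β t)⁻¹ :=
    inv_nonneg.2 (sub_nonneg.2 (h.smaleDegree_lt_one ht.le).le)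
  have hb := (smaleMajorantDeriv₂_pos h.gamma_pos hγt).le
  have hrem₀ : 0 ≤ smaleRemainder γ t (T - t) :=
    smaleRemainder_nonneg h.gamma_pos hTt.le hγT
  rw [hq] at hbound
  rw [hq, mul_div_cancel_right₀ _ hTt.ne', h.fst_sub_smaleHalley_eq_taylor ht.le]
  refine hbound.trans ?_
  generalize smaleRemainder γ t (T - t) = ρ at *
  generalize smaleMajorantDeriv₂ γ t = b at *
  generalize (-smaleMajorantDeriv γ t)⁻¹ = κ at *
  generalize (1 - smaleDegree γ β t)⁻¹ = μ at *
  generalize T - t = τ at *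
  calc μ * (κ * (2⁻¹ * (b * (κ * (2⁻¹ * (b * (q * τ) ^ 2) + q ^ 3 * ρ)) * (q * τ)) + q ^ 3 * ρ))
      ≤ μ * (κ * (2⁻¹ * (b * (κ * (2⁻¹ * (b * (q * τ) ^ 2) + q ^ 2 * ρ)) * (q * τ)) +
          q ^ 3 * ρ)) := by
        gcongr μ * (κ * (2⁻¹ * (b * (κ * (_ + ?_ * ρ)) * _) + _))
        exact pow_le_pow_of_le_one hq₀ hq₁ (by norm_num)
    _ = μ * (κ * (2⁻¹ * (b * (κ * (2⁻¹ * (b * τ ^ 2) + ρ)) * τ) + ρ)) * q ^ 3 := by ring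

lemma halleySeq_majorized (k : ℕ) :
    ‖halleySeq G G' G'' x₀ k - x₀‖ ≤ smaleSeq γ β k ∧
      ‖G (halleySeq G G' G'' x₀ k)‖ ≤ smaleMajorant γ β (smaleSeq γ β k) := by
  induction k with
  | zero => simpa [halleySeq, smaleSeq, smaleMajorant_zero] using hG.norm_base_le
  | succ k ih =>
    have hlt := (h.smaleSeq_mem k).2
    rw [halleySeq_succ, smaleSeq_succ]
    refine ⟨?_, hG.norm_apply_halleyNext_le h hlt ih.1 ih.2⟩
    linarith [norm_sub_le_norm_sub_add_norm_sub
      (halleyNext G G' G'' (halleySeq G G' G'' x₀ k)) (halleySeq G G' G'' x₀ k) x₀,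
      hG.norm_halleyNext_sub_le h hlt ih.1 ih.2, ih.1]

lemma exists_isHalleyStep_halleySeq (k : ℕ) :
    ∃ e m, IsHalleyStep G G' G'' (halleySeq G G' G'' x₀ k) (halleySeq G G' G'' x₀ (k + 1)) e m := by
  obtain ⟨hx, hGx⟩ := hG.halleySeq_majorized h k
  obtain ⟨e, m, hstep, -⟩ := hG.exists_isHalleyStep h (h.smaleSeq_mem k).2 hx hGx
  exact ⟨e, m, halleySeq_succ G G' G'' x₀ k ▸ hstep⟩

lemma halleySeq_mem_ball (k : ℕ) : halleySeq G G' G'' x₀ k ∈ ball x₀ T :=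
  mem_ball_iff_norm.2 ((hG.halleySeq_majorized h k).1.trans_lt (h.smaleSeq_mem k).2)

lemma norm_sub_halleySeq_succ_le {k : ℕ} (hy : G y = 0)
    (hyx : ‖y - halleySeq G G' G'' x₀ k‖ ≤ T - smaleSeq γ β k) :
    ‖y - halleySeq G G' G'' x₀ (k + 1)‖ ≤ (T - smaleSeq γ β (k + 1)) *
      (‖y - halleySeq G G' G'' x₀ k‖ / (T - smaleSeq γ β k)) ^ 3 := by
  obtain ⟨hx, hGx⟩ := hG.halleySeq_majorized h k
  rw [halleySeq_succ, smaleSeq_succ]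
  exact hG.norm_sub_halleyNext_le h (h.smaleSeq_mem k).2 hx hGx hy hyx

lemma norm_sub_halleySeq_succ_le_cubic {k : ℕ} (hy : G y = 0)
    (hyx : ‖y - halleySeq G G' G'' x₀ k‖ ≤ T - smaleSeq γ β k) :
    ‖y - halleySeq G G' G'' x₀ (k + 1)‖ ≤
      2 * γ ^ 2 / (2 * (1 - γ * T) ^ 2 - 1) ^ 2 * ‖y - halleySeq G G' G'' x₀ k‖ ^ 3 := by
  have hτ := sub_pos.2 (h.smaleSeq_mem k).2
  calc _ ≤ (T - smaleSeq γ β (k + 1)) *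
        (‖y - halleySeq G G' G'' x₀ k‖ / (T - smaleSeq γ β k)) ^ 3 :=
        hG.norm_sub_halleySeq_succ_le h hy hyx
    _ ≤ 2 * γ ^ 2 / (2 * (1 - γ * T) ^ 2 - 1) ^ 2 * (T - smaleSeq γ β k) ^ 3 *
        (‖y - halleySeq G G' G'' x₀ k‖ / (T - smaleSeq γ β k)) ^ 3 := by
        rw [smaleSeq_succ]
        gcongr
        exact h.fst_sub_smaleHalley_le (h.smaleSeq_mem k).2.le
    _ = _ := by rw [mul_assoc, ← mul_pow, mul_div_cancel₀ _ hτ.ne']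

lemma exists_tendsto_halleySeq : ∃ a, Tendsto (halleySeq G G' G'' x₀) atTop (𝓝 a) ∧ G a = 0 ∧
    ∀ k, ‖a - halleySeq G G' G'' x₀ k‖ ≤ T - smaleSeq γ β k := by
  obtain ⟨a, ha, hdist⟩ := exists_tendsto_of_dist_le_sub (x := halleySeq G G' G'' x₀) (fun k => by
    obtain ⟨hx, hGx⟩ := hG.halleySeq_majorized h k
    rw [dist_eq_norm', halleySeq_succ, smaleSeq_succ]
    exact hG.norm_halleyNext_sub_le h (h.smaleSeq_mem k).2 hx hGx) h.tendsto_smaleSeq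
  simp only [dist_eq_norm'] at hdist
  have ha₀ : γ * ‖a - x₀‖ < 1 := h.mul_lt_one (by simpa [halleySeq, smaleSeq] using hdist 0)
  have hf : Tendsto (fun k => smaleMajorant γ β (smaleSeq γ β k)) atTop (𝓝 0) :=
    h.smaleMajorant_fst ▸ (hasDerivAt_smaleMajorant β
      (h.mul_lt_one le_rfl)).continuousAt.tendsto.comp h.tendsto_smaleSeq
  refine ⟨a, ha, tendsto_nhds_unique ((hG.hasFDerivAt a ha₀).continuousAt.tendsto.comp ha)
    (squeeze_zero_norm (fun k => (hG.halleySeq_majorized h k).2) hf), hdist⟩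

omit [CompleteSpace X] in
lemma norm_sub_base_le_fst (hy : G y = 0) (hyS : ‖y - x₀‖ < S) : ‖y - x₀‖ ≤ T := by
  refine h.le_fst_of_smaleMajorant_nonneg hyS ?_
  have hγy : γ * (0 + ‖y - x₀‖) < 1 := by
    rw [zero_add]; exact (mul_lt_mul_of_pos_left hyS h.gamma_pos).trans h.mul_snd_lt_one
  have hadd := smaleMajorant_add β (by simp) hγy
  have htaylor := hG.norm_taylor_le (by simp) hγy
  have hb : ‖(2⁻¹ : ℝ) • G'' x₀ (y - x₀) (y - x₀)‖ ≤ 2⁻¹ * (2 * γ * ‖y - x₀‖ ^ 2) := by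
    rw [norm_smul, Real.norm_of_nonneg (by norm_num)]
    gcongr
    exact ((G'' x₀).le_of_opNorm₂_le_of_le hG.norm_deriv₂_base_le le_rfl le_rfl).trans_eq (by ring)
  have hsplit : y - x₀ = -G x₀ - (2⁻¹ : ℝ) • G'' x₀ (y - x₀) (y - x₀) -
      (G y - G x₀ - G' x₀ (y - x₀) - (2⁻¹ : ℝ) • G'' x₀ (y - x₀) (y - x₀)) := by
    rw [hy, hG.deriv_base, ContinuousLinearMap.id_apply]; abel
  have hnorm := norm_sub_le_of_le (norm_sub_le_of_le (norm_neg (G x₀) ▸ hG.norm_base_le) hb) htaylor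
  rw [← hsplit] at hnorm
  rw [zero_add, smaleMajorant_zero, smaleMajorantDeriv_zero, smaleMajorantDeriv₂_zero] at hadd
  linarith

lemma norm_sub_halleySeq_le (hy : G y = 0) (hyS : ‖y - x₀‖ < S) (k : ℕ) :
    ‖y - halleySeq G G' G'' x₀ k‖ ≤ T - smaleSeq γ β k := by
  induction k with
  | zero => simpa [halleySeq, smaleSeq] using hG.norm_sub_base_le_fst h hy hyS
  | succ k ih =>
    have hτ := sub_pos.2 (h.smaleSeq_mem k).2
    have hτ' := sub_pos.2 (h.smaleSeq_mem (k + 1)).2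
    exact (hG.norm_sub_halleySeq_succ_le h hy ih).trans (mul_le_of_le_one_right hτ'.le
      (pow_le_one₀ (by positivity) ((div_le_one hτ).2 ih)))

lemma eq_of_tendsto_halleySeq {a : X} (ha : Tendsto (halleySeq G G' G'' x₀) atTop (𝓝 a))
    (hy : G y = 0) (hyS : ‖y - x₀‖ < S) : y = a := by
  refine tendsto_nhds_unique (tendsto_iff_norm_sub_tendsto_zero.2 ?_) ha
  refine squeeze_zero_norm (fun k => ?_) (by simpa using h.tendsto_smaleSeq.const_sub T)
  rw [norm_norm, norm_sub_rev]
  exact hG.norm_sub_halleySeq_le h hy hyS k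

end SmaleGammaCondition
end SmaleGammaCondition

section Normalization

variable {X Y : Type*} [NormedAddCommGroup X] [NormedSpace ℝ X]
  [NormedAddCommGroup Y] [NormedSpace ℝ Y]
  {F : X → Y} {F' : X → X →L[ℝ] Y} {F'' : X → X →L[ℝ] X →L[ℝ] Y} {e₀ : X ≃L[ℝ] Y} {x₀ x y : X}

lemma IsHalleyStep.of_symm_comp {e m : X ≃L[ℝ] X}
    (h : IsHalleyStep (fun z => e₀.symm (F z)) (fun z => (e₀.symm : Y →L[ℝ] X).comp (F' z))
      (fun z => (ContinuousLinearMap.compL ℝ X Y X e₀.symm).comp (F'' z)) x y e m) :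
    IsHalleyStep F F' F'' x y (e.trans e₀) m where
  coe_deriv := by
    ext z
    simpa using congrArg e₀ (DFunLike.congr_fun h.coe_deriv z)
  coe_operator := h.coe_operator
  eq_sub := h.eq_sub

lemma smaleGammaCondition_symm_comp {γ β : ℝ} (hγ : 0 < γ)
    (hF : ∀ x ∈ ball x₀ (1 / γ), HasFDerivAt F (F' x) x)
    (hF' : ∀ x ∈ ball x₀ (1 / γ), HasFDerivAt F' (F'' x) x)
    (he₀ : (e₀ : X →L[ℝ] Y) = F' x₀)
    (hF'' : ∀ x ∈ ball x₀ (1 / γ), ∀ y ∈ ball x₀ (1 / γ), ‖y - x‖ + ‖x - x₀‖ < 1 / γ →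
      ‖(ContinuousLinearMap.compL ℝ X Y X (e₀.symm : Y →L[ℝ] X)).comp (F'' y - F'' x)‖ ≤
        2 * γ / (1 - γ * ‖y - x‖ - γ * ‖x - x₀‖) ^ 3 - 2 * γ / (1 - γ * ‖x - x₀‖) ^ 3)
    (hβ : ‖e₀.symm (F x₀)‖ ≤ β)
    (hF''₀ : ‖(ContinuousLinearMap.compL ℝ X Y X (e₀.symm : Y →L[ℝ] X)).comp (F'' x₀)‖ ≤ 2 * γ) :
    SmaleGammaCondition (fun z => e₀.symm (F z)) (fun z => (e₀.symm : Y →L[ℝ] X).comp (F' z))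
      (fun z => (ContinuousLinearMap.compL ℝ X Y X e₀.symm).comp (F'' z)) x₀ γ β := by
  have hmem : ∀ {r}, γ * r < 1 ↔ r < 1 / γ := (lt_div_iff₀' hγ).symm
  have hball : ∀ {x}, γ * ‖x - x₀‖ < 1 ↔ x ∈ ball x₀ (1 / γ) :=
    hmem.trans mem_ball_iff_norm.symm
  refine ⟨hγ, fun x hx => e₀.symm.hasFDerivAt.comp x (hF x (hball.1 hx)),
    fun x hx => (ContinuousLinearMap.compL ℝ X Y X e₀.symm).hasFDerivAt.comp x (hF' x (hball.1 hx)),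
    fun x y hxy => ?_, ?_, hβ, hF''₀⟩
  · have hxy' : ‖y - x‖ + ‖x - x₀‖ < 1 / γ := by rw [add_comm]; exact hmem.1 hxy
    have hx : x ∈ ball x₀ (1 / γ) :=
      mem_ball_iff_norm.2 (by linarith [norm_nonneg (y - x)])
    have hy : y ∈ ball x₀ (1 / γ) :=
      mem_ball_iff_norm.2 ((norm_sub_le_norm_sub_add_norm_sub y x x₀).trans_lt hxy')
    rw [← ContinuousLinearMap.comp_sub]
    refine (hF'' x hx y hy hxy').trans_eq ?_
    rw [smaleMajorantDeriv₂, smaleMajorantDeriv₂, mul_add, sub_sub, add_comm (γ * ‖y - x‖)]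
  · ext z
    simp [← he₀]

end Normalization

/-- Smale-type convergence of Halley's method under the majorant
γ-condition: if `‖F'(x₀)⁻¹[F''(y) - F''(x)]‖ ≤ 2γ/(1 - γ‖y - x‖ - γ‖x - x₀‖)³
- 2γ/(1 - γ‖x - x₀‖)³` whenever `‖y - x‖ + ‖x - x₀‖ < 1/γ`,
`‖F'(x₀)⁻¹F(x₀)‖ ≤ β`, `‖F'(x₀)⁻¹F''(x₀)‖ ≤ 2γ` and `α = βγ < 3 - 2√2`, then the
Halley sequence starting at `x₀` is well defined, stays in `B(x₀,t*)` and
converges to a zero `xs` of `F` in the closed ball of radius `t*`, unique in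
`B(x₀,t**)`, with the stated error bounds, where
`t* = (1 + α - √((1+α)² - 8α))/(4γ)`, `t** = (1 + α + √((1+α)² - 8α))/(4γ)`, and
`(t_k)` is the majorizing sequence generated by applying Halley's method to
`f(s) = β - s + γs²/(1 - γs)`. -/
theorem halley_method_smale_gamma_condition
    {X Y : Type*} [NormedAddCommGroup X] [NormedSpace ℝ X] [CompleteSpace X]
    [NormedAddCommGroup Y] [NormedSpace ℝ Y] [CompleteSpace Y]
    (D : Set X) (hD : IsOpen D) (hDconv : Convex ℝ D)
    (F : X → Y) (F' : X → X →L[ℝ] Y) (F'' : X → X →L[ℝ] X →L[ℝ] Y)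
    (hdF : ∀ x ∈ D, HasFDerivAt F (F' x) x)
    (hdF' : ∀ x ∈ D, HasFDerivAt F' (F'' x) x)
    (hcF'' : ContinuousOn F'' D)
    (x₀ : X) (hx₀ : x₀ ∈ D)
    (e0 : X ≃L[ℝ] Y) (he0 : (e0 : X →L[ℝ] Y) = F' x₀)
    (γ β : ℝ) (hγ : 0 < γ) (hβ : 0 < β)
    (hballD : ball x₀ (1 / γ) ⊆ D)
    (hmaj : ∀ x ∈ D, ∀ y ∈ D, ‖y - x‖ + ‖x - x₀‖ < 1 / γ →
      ‖(ContinuousLinearMap.compL ℝ X Y X (e0.symm : Y →L[ℝ] X)).comp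
          (F'' y - F'' x)‖ ≤
        2 * γ / (1 - γ * ‖y - x‖ - γ * ‖x - x₀‖) ^ 3 -
          2 * γ / (1 - γ * ‖x - x₀‖) ^ 3)
    (hinit1 : ‖(e0.symm : Y →L[ℝ] X) (F x₀)‖ ≤ β)
    (hinit2 : ‖(ContinuousLinearMap.compL ℝ X Y X (e0.symm : Y →L[ℝ] X)).comp
        (F'' x₀)‖ ≤ 2 * γ)
    (hα : β * γ < 3 - 2 * Real.sqrt 2)
    (f f1 f2 : ℝ → ℝ)
    (hf : ∀ s, f s = β - s + γ * s ^ 2 / (1 - γ * s))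
    (hf1 : ∀ s, f1 s = -2 + 1 / (1 - γ * s) ^ 2)
    (hf2 : ∀ s, f2 s = 2 * γ / (1 - γ * s) ^ 3)
    (tstar tstst : ℝ)
    (hts : tstar = (1 + β * γ - Real.sqrt ((1 + β * γ) ^ 2 - 8 * (β * γ))) / (4 * γ))
    (htss : tstst = (1 + β * γ + Real.sqrt ((1 + β * γ) ^ 2 - 8 * (β * γ))) / (4 * γ))
    (t : ℕ → ℝ) (ht0 : t 0 = 0)
    (hrec : ∀ k, t (k + 1) =
      t k - (1 / (1 - f (t k) * f2 (t k) / (2 * (f1 (t k)) ^ 2))) * (f (t k) / f1 (t k))) :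
    ∃ (x : ℕ → X) (e : ℕ → (X ≃L[ℝ] Y)) (m : ℕ → (X ≃L[ℝ] X)),
      x 0 = x₀ ∧
      (∀ k,
        ((e k : X →L[ℝ] Y) = F' (x k)) ∧
        ((m k : X →L[ℝ] X) = ContinuousLinearMap.id ℝ X -
          (2⁻¹ : ℝ) • (((e k).symm : Y →L[ℝ] X).comp
            ((F'' (x k)) ((e k).symm (F (x k)))))) ∧
        (x (k + 1) = x k - (m k).symm ((e k).symm (F (x k))))) ∧
      (∀ k, x k ∈ ball x₀ tstar) ∧
      ∃ xs ∈ closedBall x₀ tstar,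
        Filter.Tendsto x Filter.atTop (nhds xs) ∧ F xs = 0 ∧
        (∀ y ∈ ball x₀ tstst, F y = 0 → y = xs) ∧
        (∀ k, ‖xs - x (k + 1)‖ ≤
          (tstar - t (k + 1)) * (‖xs - x k‖ / (tstar - t k)) ^ 3) ∧
        (∀ k, ‖xs - x (k + 1)‖ ≤
          8 * γ ^ 2 / (3 * (2 * (1 - γ * tstar) ^ 2 - 1) ^ 2) * ‖xs - x k‖ ^ 3) := by
  have h := smaleZeros_of_lt hγ hβ hα
  rw [← hts, ← htss] at h
  have hG := smaleGammaCondition_symm_comp hγ (fun x hx => hdF x (hballD hx))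
    (fun x hx => hdF' x (hballD hx)) he0
    (fun x hx y hy => hmaj x (hballD hx) y (hballD hy)) hinit1 hinit2
  obtain rfl : f = smaleMajorant γ β := funext hf
  obtain rfl : f1 = smaleMajorantDeriv γ := funext hf1
  obtain rfl : f2 = smaleMajorantDeriv₂ γ := funext hf2
  obtain rfl : t = smaleSeq γ β := eq_smaleSeq ht0 hrec
  choose e m hstep using hG.exists_isHalleyStep_halleySeq h
  have hstep' := fun k => (hstep k).of_symm_comp
  obtain ⟨xs, hlim, hzero, hdist⟩ := hG.exists_tendsto_halleySeq h
  refine ⟨_, fun k => (e k).trans e0, m, rfl,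
    fun k => ⟨(hstep' k).coe_deriv, (hstep' k).coe_operator, (hstep' k).eq_sub⟩,
    hG.halleySeq_mem_ball h, xs, mem_closedBall_iff_norm.2 ?_, hlim,
    e0.symm.map_eq_zero_iff.1 hzero, fun y hy hFy => ?_,
    fun k => hG.norm_sub_halleySeq_succ_le h hzero (hdist k),
    fun k => (hG.norm_sub_halleySeq_succ_le_cubic h hzero (hdist k)).trans ?_⟩
  · simpa [halleySeq, smaleSeq] using hdist 0
  · exact hG.eq_of_tendsto_halleySeq h hlim (by simp [hFy]) (mem_ball_iff_norm.1 hy)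
  · gcongr ?_ * _
    rw [← div_div (8 * γ ^ 2)]
    gcongr
    linarith [sq_nonneg γ]
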